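/- Let m ≥ 1, let v, w : Finset (Fin m) → ℝ be two characteristic functions, and let i : Fin m. If for every subset S ⊆ univ \ {i} one has v(S ∪ {i}) − v(S) ≥ w(S ∪ {i}) − w(S), then φ_i(v) ≥ φ_i(w). (Strong monotonicity of the Shapley value.) -/

import Mathlib

/-- The Shapley value of player `i` in the game with characteristic function
`v` on the player set `Fin m`:
`φ_i(v) = ∑_{S ⊆ univ \ {i}} (|S|! (m−|S|−1)! / m!) (v(S ∪ {i}) − v(S))`. -/
noncomputable def shapley {m : ℕ} (v : Finset (Fin m) → ℝ) (i : Fin m) : ℝ :=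
  ∑ S ∈ (Finset.univ.erase i).powerset,
    ((S.card.factorial * (m - S.card - 1).factorial : ℝ) / (m.factorial : ℝ))
      * (v (insert i S) - v S)

section WeightedMarginalSum

variable {ι R : Type*} [Fintype ι] [DecidableEq ι] [Ring R]

/-- The sum of the marginal contributions of player `i` in the game `v`, the one to the coalition
`S` weighted by `p S`. The Shapley and Banzhaf values are instances. Unlike in Weber's probabilistic
values, the weights need not be nonnegative or sum to `1`. -/
def weightedMarginalSum (p v : Finset ι → R) (i : ι) : R :=
  ∑ S ∈ (Finset.univ.erase i).powerset, p S * (v (insert i S) - v S)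

theorem weightedMarginalSum_le_weightedMarginalSum [PartialOrder R] [IsOrderedRing R]
    {p v w : Finset ι → R} {i : ι} (hp : ∀ S ⊆ Finset.univ.erase i, 0 ≤ p S)
    (hmono : ∀ S ⊆ Finset.univ.erase i, w (insert i S) - w S ≤ v (insert i S) - v S) :
    weightedMarginalSum p w i ≤ weightedMarginalSum p v i := by
  refine Finset.sum_le_sum fun S hS => ?_
  have hSi : S ⊆ Finset.univ.erase i := Finset.mem_powerset.mp hS
  exact mul_le_mul_of_nonneg_left (hmono S hSi) (hp S hSi)

end WeightedMarginalSum

/-- The Shapley weight of a coalition of `k` out of `m` players: the probability that, in a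
uniformly random ordering of the players, the players preceding a given one form a given coalition
of size `k`. For `m ≤ k` the subtraction truncates and the value is junk. -/
noncomputable def shapleyWeight (m k : ℕ) : ℝ :=
  (k.factorial * (m - k - 1).factorial : ℝ) / m.factorial

theorem shapleyWeight_nonneg (m k : ℕ) : 0 ≤ shapleyWeight m k := by
  unfold shapleyWeight
  positivity

theorem shapley_eq_weightedMarginalSum {m : ℕ} (v : Finset (Fin m) → ℝ) (i : Fin m) :
    shapley v i = weightedMarginalSum (fun S => shapleyWeight m S.card) v i :=
  rfl

/-- Strong monotonicity of the Shapley value: if player `i`'s marginal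
contribution in `v` dominates that in `w` for every coalition, then its
Shapley value in `v` is at least its Shapley value in `w`. -/
theorem shapley_monotonicity (m : ℕ) (hm : 1 ≤ m)
    (v w : Finset (Fin m) → ℝ) (i : Fin m)
    (hmono : ∀ S ⊆ Finset.univ.erase i,
      w (insert i S) - w S ≤ v (insert i S) - v S) :
    shapley w i ≤ shapley v i := by
  simp only [shapley_eq_weightedMarginalSum]
  exact weightedMarginalSum_le_weightedMarginalSum (fun S _ => shapleyWeight_nonneg m S.card) hmono
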